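/- Let c > 0 and let a : (−c²/2, c²/3) → (0, c) be differentiable with ∫₀^{a(ξ)} (ξ + (c² − a(ξ)²)/2 − s²)·√((a(ξ)² − s²)/(c² − s²)) ds = 0 for every ξ in the interval, and set m(ξ) = a(ξ)/c. Define B(ξ) = 24·∫_{a(ξ)}^{c} (ξ + (c² − a(ξ)²)/2 − s²)·√((s² − a(ξ)²)/(c² − s²)) ds. Then for every ξ ∈ (−c²/2, c²/3), B′(ξ) = 12πc / K(m(ξ)), where K(m) = ∫₀¹ ((1 − t²)(1 − m²t²))^{−1/2} dt. -/

import Mathlib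

/-!
Substituting `s = a sin θ`, respectively `s² = c² - (c² - a²) sin² θ`, turns the normalization
integral and the phase integral into `c³ I(q, m)` and `-c³ I(1 - q, 1 - m)`, where `m = (a / c)²`,
`q = p / c²`, `p = ξ + (c² - a²) / 2` and `I` (`bandIntegral`) is one and the same combination of
complete elliptic integrals. The derivative of `I` along a curve is again linear in `K` and `E`.
Since `I(q, m)` vanishes identically in `ξ`, a multiple of its derivative may be added to that of
`-I(1 - q, 1 - m)`, and the sum collapses by Legendre's relation to
`(π / 2) (q + m / 2)′ / K(m)`. Finally `p + a² / 2 = ξ + c² / 2` has derivative `1`.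
-/

open Filter Interval MeasureTheory Real Set Topology

theorem hasDerivAt_intervalIntegral_of_continuousOn {𝕜 E : Type*} [RCLike 𝕜]
    [NormedAddCommGroup E] [NormedSpace ℝ E] [NormedSpace 𝕜 E] {F F' : 𝕜 → ℝ → E} {U : Set 𝕜}
    {x₀ : 𝕜} {a b : ℝ} (hU : U ∈ 𝓝 x₀) (hF : ∀ x ∈ U, ContinuousOn (F x) [[a, b]])
    (hF' : ContinuousOn (Function.uncurry F') (U ×ˢ [[a, b]]))
    (hderiv : ∀ x ∈ U, ∀ t ∈ [[a, b]], HasDerivAt (fun y => F y t) (F' x t) x) :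
    HasDerivAt (fun x => ∫ t in a..b, F x t) (∫ t in a..b, F' x₀ t) x₀ := by
  obtain ⟨V, hV, hVU, hVcompact⟩ := local_compact_nhds hU
  have hF'V : ContinuousOn (Function.uncurry F') (V ×ˢ [[a, b]]) :=
    hF'.mono (prod_mono_left hVU)
  obtain ⟨C, hC⟩ := (hVcompact.prod isCompact_uIcc).exists_bound_of_continuousOn hF'V
  have hF'x₀ : ContinuousOn (F' x₀) [[a, b]] :=
    hF'.comp (f := fun t => (x₀, t)) (by fun_prop) fun t ht => ⟨mem_of_mem_nhds hU, ht⟩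
  have measurable_of_continuousOn {f : ℝ → E} (hf : ContinuousOn f [[a, b]]) :
      AEStronglyMeasurable f (volume.restrict (Ι a b)) :=
    (hf.mono uIoc_subset_uIcc).aestronglyMeasurable measurableSet_uIoc
  refine (intervalIntegral.hasDerivAt_integral_of_dominated_loc_of_deriv_le
    (bound := fun _ => C) hV ?_ (hF x₀ (mem_of_mem_nhds hU)).intervalIntegrable
    (measurable_of_continuousOn hF'x₀) ?_ intervalIntegrable_const ?_).2
  · filter_upwards [hU] with x hx using measurable_of_continuousOn (hF x hx)
  · exact ae_of_all _ fun t ht x hx => hC (x, t) ⟨hx, uIoc_subset_uIcc ht⟩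
  · exact ae_of_all _ fun t ht x hx => hderiv x (hVU hx) t (uIoc_subset_uIcc ht)

/-- Legendre's `Δ(θ) = √(1 - m sin² θ)`, written in terms of the parameter `m = k²` rather than
the modulus `k`. -/
noncomputable def legendreDelta (m θ : ℝ) : ℝ := √(1 - m * sin θ ^ 2)

/-- The complete elliptic integral of the first kind in Legendre's trigonometric form, as a
function of the parameter `m = k²`. -/
noncomputable def ellipticK (m : ℝ) : ℝ := ∫ θ in 0..π / 2, (legendreDelta m θ)⁻¹

/-- The complete elliptic integral of the second kind in Legendre's trigonometric form, as a
function of the parameter `m = k²`. -/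
noncomputable def ellipticE (m : ℝ) : ℝ := ∫ θ in 0..π / 2, legendreDelta m θ

section Legendre

variable {m : ℝ}

theorem one_sub_mul_sin_sq_pos (hm : m < 1) (θ : ℝ) : 0 < 1 - m * sin θ ^ 2 := by
  obtain h | h := (sq_nonneg (sin θ)).eq_or_lt
  · simp [← h]
  · nlinarith [sin_sq_le_one θ, mul_lt_mul_of_pos_right hm h]

theorem legendreDelta_pos (hm : m < 1) (θ : ℝ) : 0 < legendreDelta m θ :=
  sqrt_pos.2 (one_sub_mul_sin_sq_pos hm θ)

theorem legendreDelta_ne_zero (hm : m < 1) (θ : ℝ) : legendreDelta m θ ≠ 0 :=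
  (legendreDelta_pos hm θ).ne'

theorem legendreDelta_sq (hm : m < 1) (θ : ℝ) : legendreDelta m θ ^ 2 = 1 - m * sin θ ^ 2 :=
  sq_sqrt (one_sub_mul_sin_sq_pos hm θ).le

theorem legendreDelta_le_one (hm : 0 ≤ m) (θ : ℝ) : legendreDelta m θ ≤ 1 :=
  sqrt_le_one.2 (sub_le_self _ (by positivity))

theorem sqrt_one_sub_le_legendreDelta (hm : 0 ≤ m) (θ : ℝ) : √(1 - m) ≤ legendreDelta m θ :=
  sqrt_le_sqrt (by nlinarith [sin_sq_le_one θ])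

@[fun_prop]
theorem continuous_uncurry_legendreDelta : Continuous (Function.uncurry legendreDelta) := by
  unfold legendreDelta Function.uncurry
  fun_prop

@[fun_prop]
theorem continuous_legendreDelta (m : ℝ) : Continuous (legendreDelta m) :=
  continuous_uncurry_legendreDelta.uncurry_left m

theorem continuous_inv_legendreDelta (hm : m < 1) : Continuous fun θ => (legendreDelta m θ)⁻¹ :=
  (continuous_legendreDelta m).inv₀ (legendreDelta_ne_zero hm)

theorem continuousOn_uncurry_inv_legendreDelta :
    ContinuousOn (fun x : ℝ × ℝ => (legendreDelta x.1 x.2)⁻¹) {x | x.1 < 1} :=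
  continuous_uncurry_legendreDelta.continuousOn.inv₀ fun x hx => legendreDelta_ne_zero hx x.2

theorem hasDerivAt_legendreDelta (hm : m < 1) (θ : ℝ) :
    HasDerivAt (legendreDelta m) (-(m * sin θ * cos θ) * (legendreDelta m θ)⁻¹) θ := by
  have hsq : HasDerivAt (fun θ => 1 - m * sin θ ^ 2) (-(m * (2 * sin θ * cos θ))) θ := by
    simpa using (((hasDerivAt_sin θ).fun_pow 2).const_mul m).const_sub 1
  refine (hsq.sqrt (one_sub_mul_sin_sq_pos hm θ).ne').congr_deriv ?_
  rw [legendreDelta]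
  ring

theorem hasDerivAt_legendreDelta_parameter (hm : m < 1) (θ : ℝ) :
    HasDerivAt (fun m => legendreDelta m θ) (-(sin θ ^ 2 * (legendreDelta m θ)⁻¹) / 2) m := by
  have hlin : HasDerivAt (fun m => 1 - m * sin θ ^ 2) (-sin θ ^ 2) m := by
    simpa using ((hasDerivAt_id m).mul_const (sin θ ^ 2)).const_sub 1
  refine (hlin.sqrt (one_sub_mul_sin_sq_pos hm θ).ne').congr_deriv ?_
  rw [legendreDelta]
  ring

theorem integral_sin_mul_cos_mul_deriv_eq_zero {g g' : ℝ → ℝ}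
    (hg : ∀ θ, HasDerivAt g (g' θ) θ) (hg' : Continuous g') :
    ∫ θ in 0..π / 2, ((cos θ ^ 2 - sin θ ^ 2) * g θ + sin θ * cos θ * g' θ) = 0 := by
  have hderiv (θ : ℝ) : HasDerivAt (fun θ => sin θ * cos θ * g θ)
      ((cos θ ^ 2 - sin θ ^ 2) * g θ + sin θ * cos θ * g' θ) θ :=
    (((hasDerivAt_sin θ).fun_mul (hasDerivAt_cos θ)).fun_mul (hg θ)).congr_deriv (by ring)
  have hcont : Continuous g := continuous_iff_continuousAt.2 fun θ => (hg θ).continuousAt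
  rw [intervalIntegral.integral_eq_sub_of_hasDerivAt (fun θ _ => hderiv θ)
    (Continuous.intervalIntegrable (by fun_prop) _ _)]
  simp

/-- The last two terms of `hf` are the derivative of `sin θ cos θ g(θ)`, which vanishes at both
endpoints. -/
theorem integral_eq_mul_ellipticE_add_mul_ellipticK {f g g' : ℝ → ℝ} {α β : ℝ} (hm : m < 1)
    (hg : ∀ θ, HasDerivAt g (g' θ) θ) (hg' : Continuous g')
    (hf : ∀ θ, f θ = α * legendreDelta m θ + β * (legendreDelta m θ)⁻¹ +
      ((cos θ ^ 2 - sin θ ^ 2) * g θ + sin θ * cos θ * g' θ)) :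
    ∫ θ in 0..π / 2, f θ = α * ellipticE m + β * ellipticK m := by
  have hcont : Continuous g := continuous_iff_continuousAt.2 fun θ => (hg θ).continuousAt
  simp_rw [hf]
  rw [intervalIntegral.integral_add, intervalIntegral.integral_add,
    intervalIntegral.integral_const_mul, intervalIntegral.integral_const_mul,
    integral_sin_mul_cos_mul_deriv_eq_zero hg hg', add_zero, ellipticE, ellipticK]
  all_goals
    exact Continuous.intervalIntegrable
      (by fun_prop (disch := exact legendreDelta_ne_zero hm)) _ _

theorem mul_integral_sin_sq_mul_inv_legendreDelta (hm : m < 1) :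
    m * ∫ θ in 0..π / 2, sin θ ^ 2 * (legendreDelta m θ)⁻¹ = ellipticK m - ellipticE m := by
  rw [← intervalIntegral.integral_const_mul,
    integral_eq_mul_ellipticE_add_mul_ellipticK (α := -1) (β := 1) (g := 0) (g' := 0) hm
      (fun θ => hasDerivAt_const θ 0) continuous_const fun θ => ?_]
  · ring
  · have hΔ := legendreDelta_ne_zero hm θ
    simp only [Pi.zero_apply]
    field_simp
    linear_combination legendreDelta_sq hm θ

theorem hasDerivAt_inv_legendreDelta (hm : m < 1) (θ : ℝ) :
    HasDerivAt (fun θ => (legendreDelta m θ)⁻¹)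
      (m * sin θ * cos θ * (legendreDelta m θ)⁻¹ ^ 3) θ := by
  refine ((hasDerivAt_legendreDelta hm θ).fun_inv (legendreDelta_ne_zero hm θ)).congr_deriv ?_
  field_simp

theorem mul_integral_sin_sq_mul_inv_legendreDelta_pow_three (hm : m < 1) :
    m * (1 - m) * ∫ θ in 0..π / 2, sin θ ^ 2 * (legendreDelta m θ)⁻¹ ^ 3 =
      ellipticE m - (1 - m) * ellipticK m := by
  rw [← intervalIntegral.integral_const_mul,
    integral_eq_mul_ellipticE_add_mul_ellipticK (α := 1) (β := -(1 - m)) hm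
      (fun θ => (hasDerivAt_inv_legendreDelta hm θ).const_mul (-m))
      (by fun_prop (disch := exact legendreDelta_ne_zero hm)) fun θ => ?_]
  · ring
  · have hΔ := legendreDelta_ne_zero hm θ
    field_simp
    rw [legendreDelta_sq hm θ, cos_sq']
    ring

theorem hasDerivAt_ellipticE_integral (hm : m < 1) :
    HasDerivAt ellipticE
      (∫ θ in 0..π / 2, -(sin θ ^ 2 * (legendreDelta m θ)⁻¹) / 2) m := by
  refine hasDerivAt_intervalIntegral_of_continuousOn
    (F' := fun m θ => -(sin θ ^ 2 * (legendreDelta m θ)⁻¹) / 2) (Iio_mem_nhds hm)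
    (fun m _ => (continuous_legendreDelta m).continuousOn) ?_
    fun m hm θ _ => hasDerivAt_legendreDelta_parameter hm θ
  have hΔ := continuousOn_uncurry_inv_legendreDelta.mono
    fun x (hx : x ∈ Iio 1 ×ˢ [[0, π / 2]]) => hx.1
  unfold Function.uncurry
  fun_prop

theorem hasDerivAt_ellipticK_integral (hm : m < 1) :
    HasDerivAt ellipticK
      (∫ θ in 0..π / 2, sin θ ^ 2 * (legendreDelta m θ)⁻¹ ^ 3 / 2) m := by
  refine hasDerivAt_intervalIntegral_of_continuousOn
    (F' := fun m θ => sin θ ^ 2 * (legendreDelta m θ)⁻¹ ^ 3 / 2) (Iio_mem_nhds hm)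
    (fun m hm => (continuous_inv_legendreDelta hm).continuousOn) ?_ fun m hm θ _ => ?_
  · have hΔ := continuousOn_uncurry_inv_legendreDelta.mono
      fun x (hx : x ∈ Iio 1 ×ˢ [[0, π / 2]]) => hx.1
    unfold Function.uncurry
    fun_prop
  · refine ((hasDerivAt_legendreDelta_parameter hm θ).fun_inv
      (legendreDelta_ne_zero hm θ)).congr_deriv ?_
    field_simp

theorem hasDerivAt_ellipticE (hm₀ : m ≠ 0) (hm : m < 1) :
    HasDerivAt ellipticE ((ellipticE m - ellipticK m) / (2 * m)) m := by
  refine (hasDerivAt_ellipticE_integral hm).congr_deriv ?_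
  rw [intervalIntegral.integral_div, intervalIntegral.integral_neg, ← neg_sub (ellipticK m),
    ← mul_integral_sin_sq_mul_inv_legendreDelta hm]
  field_simp

theorem hasDerivAt_ellipticK (hm₀ : m ≠ 0) (hm : m < 1) :
    HasDerivAt ellipticK
      ((ellipticE m - (1 - m) * ellipticK m) / (2 * m * (1 - m))) m := by
  refine (hasDerivAt_ellipticK_integral hm).congr_deriv ?_
  have hm₁ : 1 - m ≠ 0 := (sub_pos.2 hm).ne'
  rw [intervalIntegral.integral_div, ← mul_integral_sin_sq_mul_inv_legendreDelta_pow_three hm]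
  field_simp

theorem ellipticK_zero : ellipticK 0 = π / 2 := by
  simp [ellipticK, legendreDelta]

theorem ellipticE_one : ellipticE 1 = 1 := by
  have hcos : ∫ θ in 0..π / 2, legendreDelta 1 θ = ∫ θ in 0..π / 2, cos θ := by
    refine intervalIntegral.integral_congr fun θ hθ => ?_
    rw [uIcc_of_le (by positivity)] at hθ
    rw [legendreDelta, one_mul, ← cos_sq',
      sqrt_sq (cos_nonneg_of_mem_Icc ⟨by linarith [hθ.1, pi_pos], hθ.2⟩)]
  simp [ellipticE, hcos]

theorem continuous_ellipticE : Continuous ellipticE :=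
  intervalIntegral.continuous_parametric_intervalIntegral_of_continuous'
    continuous_uncurry_legendreDelta 0 (π / 2)

theorem ellipticK_pos (hm : m < 1) : 0 < ellipticK m :=
  intervalIntegral.intervalIntegral_pos_of_pos
    ((continuous_inv_legendreDelta hm).intervalIntegrable _ _)
    (fun θ => inv_pos.2 (legendreDelta_pos hm θ)) (by positivity)

theorem ellipticK_le (hm₀ : 0 ≤ m) (hm : m < 1) : ellipticK m ≤ π / 2 / √(1 - m) := by
  have hle : ellipticK m ≤ ∫ _ in 0..π / 2, (√(1 - m))⁻¹ :=
    intervalIntegral.integral_mono (by positivity)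
      ((continuous_inv_legendreDelta hm).intervalIntegrable _ _) intervalIntegrable_const
      fun θ => inv_anti₀ (sqrt_pos.2 (sub_pos.2 hm)) (sqrt_one_sub_le_legendreDelta hm₀ θ)
  simpa [div_eq_mul_inv] using hle

theorem ellipticE_le_ellipticK (hm₀ : 0 ≤ m) (hm : m < 1) : ellipticE m ≤ ellipticK m :=
  intervalIntegral.integral_mono (by positivity)
    ((continuous_legendreDelta m).intervalIntegrable _ _)
    ((continuous_inv_legendreDelta hm).intervalIntegrable _ _) fun θ =>
      (legendreDelta_le_one hm₀ θ).trans
        ((one_le_inv₀ (legendreDelta_pos hm θ)).2 (legendreDelta_le_one hm₀ θ))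

theorem one_sub_mul_ellipticK_le_ellipticE (hm₀ : 0 ≤ m) (hm : m < 1) :
    (1 - m) * ellipticK m ≤ ellipticE m := by
  rw [ellipticK, ← intervalIntegral.integral_const_mul]
  refine intervalIntegral.integral_mono (by positivity)
    (((continuous_inv_legendreDelta hm).const_mul _).intervalIntegrable _ _)
    ((continuous_legendreDelta m).intervalIntegrable _ _) fun θ => ?_
  rw [← div_eq_mul_inv, div_le_iff₀ (legendreDelta_pos hm θ), ← sq, legendreDelta_sq hm]
  nlinarith [sin_sq_le_one θ]

theorem hasDerivAt_legendre_form (hm₀ : 0 < m) (hm : m < 1) :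
    HasDerivAt (fun m => ellipticE m * ellipticK (1 - m) + ellipticE (1 - m) * ellipticK m -
      ellipticK m * ellipticK (1 - m)) 0 m := by
  have hm₁ : 1 - m ≠ 0 := (sub_pos.2 hm).ne'
  have hE := hasDerivAt_ellipticE hm₀.ne' hm
  have hK := hasDerivAt_ellipticK hm₀.ne' hm
  have hE' := (hasDerivAt_ellipticE hm₁ (by linarith)).comp_const_sub 1 m
  have hK' := (hasDerivAt_ellipticK hm₁ (by linarith)).comp_const_sub 1 m
  refine (((hE.fun_mul hK').fun_add (hE'.fun_mul hK)).fun_sub (hK.fun_mul hK')).congr_deriv ?_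
  rw [sub_sub_cancel]
  field_simp
  ring

theorem tendsto_ellipticK_sub_ellipticE_mul_ellipticK :
    Tendsto (fun m => (ellipticK m - ellipticE m) * ellipticK (1 - m)) (𝓝[>] 0) (𝓝 0) := by
  have hbound : Tendsto (fun m => ellipticK m * (π / 2 * √m)) (𝓝[>] 0) (𝓝 0) := by
    have hK : ContinuousAt ellipticK 0 := (hasDerivAt_ellipticK_integral one_pos).continuousAt
    have hmul : ContinuousAt (fun m => ellipticK m * (π / 2 * √m)) 0 := by fun_prop
    simpa using hmul.tendsto.mono_left nhdsWithin_le_nhds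
  refine tendsto_of_tendsto_of_tendsto_of_le_of_le' tendsto_const_nhds hbound ?_ ?_ <;>
    filter_upwards [Ioo_mem_nhdsGT one_pos] with m ⟨hm₀, hm₁⟩
  · exact mul_nonneg (sub_nonneg.2 (ellipticE_le_ellipticK hm₀.le hm₁))
      (ellipticK_pos (by linarith)).le
  · have hKE : ellipticK m - ellipticE m ≤ m * ellipticK m := by
      linarith [one_sub_mul_ellipticK_le_ellipticE hm₀.le hm₁]
    have hK' : ellipticK (1 - m) ≤ π / 2 / √m := by
      simpa using ellipticK_le (m := 1 - m) (by linarith) (by linarith)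
    have hKpos := ellipticK_pos hm₁
    calc (ellipticK m - ellipticE m) * ellipticK (1 - m)
        ≤ m * ellipticK m * (π / 2 / √m) :=
          mul_le_mul hKE hK' (ellipticK_pos (by linarith)).le (by positivity)
      _ = ellipticK m * (π / 2 * (m / √m)) := by ring
      _ = ellipticK m * (π / 2 * √m) := by rw [div_sqrt]

theorem tendsto_legendre_form :
    Tendsto (fun m => ellipticE m * ellipticK (1 - m) + ellipticE (1 - m) * ellipticK m -
      ellipticK m * ellipticK (1 - m)) (𝓝[>] 0) (𝓝 (π / 2)) := by
  have hE : Continuous fun m => ellipticE (1 - m) := continuous_ellipticE.comp (by fun_prop)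
  have hK : ContinuousAt ellipticK 0 := (hasDerivAt_ellipticK_integral one_pos).continuousAt
  have hEK : Tendsto (fun m => ellipticE (1 - m) * ellipticK m) (𝓝[>] 0) (𝓝 (π / 2)) := by
    simpa [ellipticE_one, ellipticK_zero] using
      (hE.continuousAt.fun_mul hK).tendsto.mono_left nhdsWithin_le_nhds
  have hsub := hEK.sub tendsto_ellipticK_sub_ellipticE_mul_ellipticK
  rw [sub_zero] at hsub
  exact hsub.congr fun m => by ring

theorem legendre_relation (hm₀ : 0 < m) (hm : m < 1) :
    ellipticE m * ellipticK (1 - m) + ellipticE (1 - m) * ellipticK m -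
      ellipticK m * ellipticK (1 - m) = π / 2 := by
  obtain ⟨w, hw⟩ := isOpen_Ioo.exists_is_const_of_deriv_eq_zero isPreconnected_Ioo
    (fun x (hx : x ∈ Ioo 0 1) =>
      (hasDerivAt_legendre_form hx.1 hx.2).differentiableAt.differentiableWithinAt)
    (fun x hx => (hasDerivAt_legendre_form hx.1 hx.2).deriv)
  have hlim := tendsto_const_nhds.congr' <|
    (eventually_of_mem (Ioo_mem_nhdsGT one_pos) hw).mono fun _ => Eq.symm
  rw [hw m ⟨hm₀, hm⟩, tendsto_nhds_unique hlim tendsto_legendre_form]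

end Legendre

theorem cos_pos_of_mem_Ioo_zero_pi_div_two {θ : ℝ} (hθ : θ ∈ Ioo 0 (π / 2)) : 0 < cos θ :=
  cos_pos_of_mem_Ioo ⟨by linarith [hθ.1, pi_pos], hθ.2⟩

theorem integral_comp_mul_sin_mul_cos {a : ℝ} (ha : 0 ≤ a) (g : ℝ → ℝ) :
    ∫ θ in 0..π / 2, g (a * sin θ) * (a * cos θ) = ∫ s in 0..a, g s := by
  have hsubst := intervalIntegral.integral_comp_mul_deriv_of_deriv_nonneg (a := 0) (b := π / 2)
    (f := fun θ => a * sin θ) (f' := fun θ => a * cos θ) (g := g) (by fun_prop)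
    (fun θ _ => (hasDerivAt_sin θ).const_mul a) fun θ hθ => by
      rw [min_eq_left (by positivity), max_eq_right (by positivity)] at hθ
      exact mul_nonneg ha (cos_pos_of_mem_Ioo_zero_pi_div_two hθ).le
  simpa using hsubst

theorem integral_comp_legendreDelta {m : ℝ} (hm₀ : 0 ≤ m) (hm : m < 1) {c : ℝ} (hc : 0 ≤ c)
    (g : ℝ → ℝ) :
    ∫ θ in 0..π / 2, g (c * legendreDelta m θ) *
        (c * (m * sin θ * cos θ * (legendreDelta m θ)⁻¹)) =
      ∫ s in c * √(1 - m)..c, g s := by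
  have hsubst := intervalIntegral.integral_comp_mul_deriv_of_deriv_nonpos (a := 0) (b := π / 2)
    (f := fun θ => c * legendreDelta m θ)
    (f' := fun θ => c * (-(m * sin θ * cos θ) * (legendreDelta m θ)⁻¹)) (g := g) (by fun_prop)
    (fun θ _ => (hasDerivAt_legendreDelta hm θ).const_mul c) fun θ hθ => by
      rw [min_eq_left (by positivity), max_eq_right (by positivity)] at hθ
      have hcos := cos_pos_of_mem_Ioo_zero_pi_div_two hθ
      have hsin := sin_pos_of_mem_Ioo ⟨hθ.1, by linarith [hθ.2, pi_pos]⟩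
      have hΔ := legendreDelta_pos hm θ
      rw [neg_mul, mul_neg, neg_nonpos]
      positivity
  rw [intervalIntegral.integral_symm c, ← neg_eq_iff_eq_neg, ← intervalIntegral.integral_neg]
  simpa [legendreDelta] using hsubst

theorem integral_inv_sqrt_eq_ellipticK (m : ℝ) :
    ∫ t in 0..1, (√((1 - t ^ 2) * (1 - m * t ^ 2)))⁻¹ = ellipticK m := by
  rw [← integral_comp_mul_sin_mul_cos zero_le_one]
  refine intervalIntegral.integral_congr_Ioo_of_le (by positivity) fun θ hθ => ?_
  have hcos := cos_pos_of_mem_Ioo_zero_pi_div_two hθ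
  simp only [one_mul]
  rw [← cos_sq', sqrt_mul (sq_nonneg _), sqrt_sq hcos.le, legendreDelta]
  field_simp

/-- The common Legendre form of the normalization integral and of the phase integral, with `m` the
squared modulus and `q` the zero of the first factor, both in units of `c²`. -/
noncomputable def bandIntegral (q m : ℝ) : ℝ :=
  ∫ θ in 0..π / 2, (q - m * sin θ ^ 2) * (m * cos θ ^ 2) * (legendreDelta m θ)⁻¹

theorem bandIntegral_eq {m : ℝ} (hm : m < 1) (q : ℝ) :
    bandIntegral q m =
      (q - (2 - m) / 3) * ellipticE m + -((1 - m) * (q - 2 / 3)) * ellipticK m := by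
  refine integral_eq_mul_ellipticE_add_mul_ellipticK hm
    (fun θ => (hasDerivAt_legendreDelta hm θ).const_mul (m / 3))
    (by fun_prop (disch := exact legendreDelta_ne_zero hm)) fun θ => ?_
  have hΔ := legendreDelta_ne_zero hm θ
  field_simp
  rw [legendreDelta_sq hm θ, cos_sq']
  ring

theorem integral_mul_sqrt_eq_bandIntegral {a c : ℝ} (ha : 0 ≤ a) (hc : 0 < c) (p : ℝ) :
    ∫ s in 0..a, (p - s ^ 2) * √((a ^ 2 - s ^ 2) / (c ^ 2 - s ^ 2)) =
      c ^ 3 * bandIntegral (p / c ^ 2) ((a / c) ^ 2) := by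
  rw [← integral_comp_mul_sin_mul_cos ha, bandIntegral, ← intervalIntegral.integral_const_mul]
  refine intervalIntegral.integral_congr_Ioo_of_le (by positivity) fun θ hθ => ?_
  have hcos := (cos_pos_of_mem_Ioo_zero_pi_div_two hθ).le
  have hnum : a ^ 2 - (a * sin θ) ^ 2 = (a * cos θ) ^ 2 := by
    rw [mul_pow, mul_pow, cos_sq']
    ring
  have hden : c ^ 2 - (a * sin θ) ^ 2 = c ^ 2 * (1 - (a / c) ^ 2 * sin θ ^ 2) := by
    field_simp
  rw [hnum, hden, sqrt_div (sq_nonneg _), sqrt_sq (by positivity), sqrt_mul (sq_nonneg _),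
    sqrt_sq hc.le, ← legendreDelta]
  field_simp

theorem integral_mul_sqrt_eq_neg_bandIntegral {a c : ℝ} (ha : 0 < a) (hac : a < c) (p : ℝ) :
    ∫ s in a..c, (p - s ^ 2) * √((s ^ 2 - a ^ 2) / (c ^ 2 - s ^ 2)) =
      -(c ^ 3 * bandIntegral (1 - p / c ^ 2) (1 - (a / c) ^ 2)) := by
  have hc : 0 < c := ha.trans hac
  set m := 1 - (a / c) ^ 2 with hm
  have hm₁ : m < 1 := sub_lt_self _ (by positivity)
  have hm₀ : 0 < m := sub_pos.2 (pow_lt_one₀ (by positivity) ((div_lt_one hc).2 hac) two_ne_zero)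
  have ha_eq : c * √(1 - m) = a := by
    rw [hm, sub_sub_cancel, sqrt_sq (by positivity), mul_div_cancel₀ a hc.ne']
  have ha_sq : a ^ 2 = c ^ 2 * (1 - m) := by rw [hm]; field_simp; ring
  have hsubst := integral_comp_legendreDelta hm₀.le hm₁ hc.le
    fun s => (p - s ^ 2) * √((s ^ 2 - a ^ 2) / (c ^ 2 - s ^ 2))
  rw [ha_eq] at hsubst
  rw [← hsubst, bandIntegral, ← intervalIntegral.integral_const_mul,
    ← intervalIntegral.integral_neg]
  refine intervalIntegral.integral_congr_Ioo_of_le (by positivity) fun θ hθ => ?_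
  have hcos := cos_pos_of_mem_Ioo_zero_pi_div_two hθ
  have hsin := sin_pos_of_mem_Ioo ⟨hθ.1, by linarith [hθ.2, pi_pos]⟩
  have hΔ := legendreDelta_pos hm₁ θ
  have hratio : (c ^ 2 * (1 - m * sin θ ^ 2) - a ^ 2) / (c ^ 2 - c ^ 2 * (1 - m * sin θ ^ 2)) =
      (cos θ / sin θ) ^ 2 := by
    rw [div_pow, cos_sq', ha_sq]
    field_simp
    ring
  rw [mul_pow, legendreDelta_sq hm₁, hratio, sqrt_sq (by positivity)]
  field_simp
  ring

theorem hasDerivAt_bandIntegral {q m : ℝ → ℝ} {q' m' ξ : ℝ} (hq : HasDerivAt q q' ξ)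
    (hm : HasDerivAt m m' ξ) (hm₀ : m ξ ≠ 0) (hm₁ : m ξ < 1) :
    HasDerivAt (fun t => bandIntegral (q t) (m t))
      (q' * (ellipticE (m ξ) - (1 - m ξ) * ellipticK (m ξ)) +
        m' / 2 * (ellipticE (m ξ) - (1 - q ξ) * ellipticK (m ξ))) ξ := by
  have hE := (hasDerivAt_ellipticE hm₀ hm₁).comp ξ hm
  have hK := (hasDerivAt_ellipticK hm₀ hm₁).comp ξ hm
  have hclosed := ((hq.fun_sub ((hm.const_sub 2).div_const 3)).fun_mul hE).fun_add
    (((hm.const_sub 1).fun_mul (hq.sub_const (2 / 3))).fun_neg.fun_mul hK)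
  have heq : (fun t => bandIntegral (q t) (m t)) =ᶠ[𝓝 ξ] _ :=
    (hm.continuousAt.eventually_lt_const hm₁).mono fun t ht => bandIntegral_eq ht (q t)
  refine (hclosed.congr_of_eventuallyEq heq).congr_deriv ?_
  have hm₁' : 1 - m ξ ≠ 0 := (sub_pos.2 hm₁).ne'
  simp only [Function.comp_apply]
  field_simp
  ring

/-- Adding `K(1 - m)` times the vanishing derivative of `bandIntegral q m` to `K(m)` times the
derivative of `-bandIntegral (1 - q) (1 - m)` produces Legendre's combination. -/
theorem hasDerivAt_neg_bandIntegral_one_sub {q m : ℝ → ℝ} {d ξ : ℝ}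
    (hm : DifferentiableAt ℝ m ξ) (hqm : HasDerivAt (fun t => q t + m t / 2) d ξ)
    (hm₀ : 0 < m ξ) (hm₁ : m ξ < 1) (hzero : ∀ᶠ t in 𝓝 ξ, bandIntegral (q t) (m t) = 0) :
    HasDerivAt (fun t => -bandIntegral (1 - q t) (1 - m t))
      (π / 2 * d / ellipticK (m ξ)) ξ := by
  obtain ⟨m', hm⟩ : ∃ m', HasDerivAt m m' ξ := ⟨_, hm.hasDerivAt⟩
  have hq : HasDerivAt q (d - m' / 2) ξ := by
    simpa using hqm.fun_sub (hm.div_const 2)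
  have hvanish := (hasDerivAt_bandIntegral hq hm hm₀.ne' hm₁).unique
    ((hasDerivAt_const ξ 0).congr_of_eventuallyEq hzero)
  have hcompl := (hasDerivAt_bandIntegral (hq.const_sub 1) (hm.const_sub 1)
    (sub_pos.2 hm₁).ne' (sub_lt_self 1 hm₀)).fun_neg
  refine hcompl.congr_deriv ?_
  rw [eq_div_iff (ellipticK_pos hm₁).ne', ← legendre_relation hm₀ hm₁]
  linear_combination (-ellipticK (1 - m ξ)) * hvanish

theorem phase_derivative_elliptic_general {c ξ d : ℝ} {a p : ℝ → ℝ}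
    (ha : DifferentiableAt ℝ a ξ) (hp : HasDerivAt (fun t => p t + a t ^ 2 / 2) d ξ)
    (ha₀ : 0 < a ξ) (hac : a ξ < c)
    (hnorm : ∀ᶠ t in 𝓝 ξ,
      ∫ s in 0..a t, (p t - s ^ 2) * √((a t ^ 2 - s ^ 2) / (c ^ 2 - s ^ 2)) = 0) :
    HasDerivAt
      (fun t => 24 * ∫ s in a t..c, (p t - s ^ 2) * √((s ^ 2 - a t ^ 2) / (c ^ 2 - s ^ 2)))
      (12 * π * c * d / ∫ t in 0..1, (√((1 - t ^ 2) * (1 - (a ξ / c) ^ 2 * t ^ 2)))⁻¹) ξ := by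
  have hc : 0 < c := ha₀.trans hac
  have hrange : ∀ᶠ t in 𝓝 ξ, 0 < a t ∧ a t < c :=
    (ha.continuousAt.eventually_const_lt ha₀).and (ha.continuousAt.eventually_lt_const hac)
  have hqm : HasDerivAt (fun t => p t / c ^ 2 + (a t / c) ^ 2 / 2) (d / c ^ 2) ξ :=
    (hp.div_const (c ^ 2)).congr_of_eventuallyEq (.of_forall fun t => by ring)
  have hzero : ∀ᶠ t in 𝓝 ξ, bandIntegral (p t / c ^ 2) ((a t / c) ^ 2) = 0 := by
    filter_upwards [hrange, hnorm] with t ht htnorm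
    rw [integral_mul_sqrt_eq_bandIntegral ht.1.le hc] at htnorm
    exact (mul_eq_zero.1 htnorm).resolve_left (by positivity)
  have hphase := (hasDerivAt_neg_bandIntegral_one_sub (by fun_prop) hqm (by positivity)
    (pow_lt_one₀ (by positivity) ((div_lt_one hc).2 hac) two_ne_zero) hzero).const_mul (24 * c ^ 3)
  have heq : ∀ᶠ t in 𝓝 ξ,
      24 * ∫ s in a t..c, (p t - s ^ 2) * √((s ^ 2 - a t ^ 2) / (c ^ 2 - s ^ 2)) =
        24 * c ^ 3 * -bandIntegral (1 - p t / c ^ 2) (1 - (a t / c) ^ 2) := by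
    filter_upwards [hrange] with t ht
    rw [integral_mul_sqrt_eq_neg_bandIntegral ht.1 ht.2]
    ring
  refine (hphase.congr_of_eventuallyEq heq).congr_deriv ?_
  rw [integral_inv_sqrt_eq_ellipticK]
  field_simp
  ring

/-- the derivative of the Riemann–Hilbert phase:
`B′(ξ) = 12πc/K(m(ξ))`, where `m(ξ) = a(ξ)/c`. -/
theorem phase_derivative_elliptic (c : ℝ) (hc : 0 < c) (a : ℝ → ℝ)
    (hrange : ∀ ξ ∈ Set.Ioo (-c ^ 2 / 2) (c ^ 2 / 3), 0 < a ξ ∧ a ξ < c)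
    (hdiff : ∀ ξ ∈ Set.Ioo (-c ^ 2 / 2) (c ^ 2 / 3), DifferentiableAt ℝ a ξ)
    (hnorm : ∀ ξ ∈ Set.Ioo (-c ^ 2 / 2) (c ^ 2 / 3),
      ∫ s in (0:ℝ)..(a ξ),
        (ξ + (c ^ 2 - (a ξ) ^ 2) / 2 - s ^ 2) *
          Real.sqrt (((a ξ) ^ 2 - s ^ 2) / (c ^ 2 - s ^ 2)) = 0) :
    ∀ ξ ∈ Set.Ioo (-c ^ 2 / 2) (c ^ 2 / 3),
      deriv (fun t => 24 * ∫ s in (a t)..c,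
          (t + (c ^ 2 - (a t) ^ 2) / 2 - s ^ 2) *
            Real.sqrt ((s ^ 2 - (a t) ^ 2) / (c ^ 2 - s ^ 2))) ξ =
        12 * Real.pi * c /
          (∫ t in (0:ℝ)..1, (Real.sqrt ((1 - t ^ 2) * (1 - (a ξ / c) ^ 2 * t ^ 2)))⁻¹) := by
  intro ξ hξ
  have hp : HasDerivAt (fun t => t + (c ^ 2 - a t ^ 2) / 2 + a t ^ 2 / 2) 1 ξ :=
    ((hasDerivAt_id' ξ).add_const (c ^ 2 / 2)).congr_of_eventuallyEq (.of_forall fun t => by ring)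
  simpa using (phase_derivative_elliptic_general (hdiff ξ hξ) hp (hrange ξ hξ).1 (hrange ξ hξ).2
    (eventually_of_mem (Ioo_mem_nhds hξ.1 hξ.2) hnorm)).deriv
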